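/- Let ‖·‖ be a norm on ℝ^d, let X = B(0,1) be its closed unit ball with normalized Lebesgue measure μ (μ(X) = 1), let α ∈ (0,1], let ε₁,…,ε_M ≥ 0, and let p ∈ [1,∞]. Then min_{1≤m≤M} ε_m + (1/2) M^{−α/d} ≤ inf over all datasites x⁽¹⁾,…,x⁽ᴹ⁾ ∈ X of ‖u_{0,ε}‖_{L_p(X,μ)} ≤ max_{1≤m≤M} ε_m + 3 M^{−α/d}, where u_{0,ε}(x) = min_{1≤m≤M}(ε_m + ‖x − x⁽ᵐ⁾‖^α). -/

import Mathlib

open MeasureTheory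
open scoped ENNReal

/-!
Lower bound: `{u_{0,0} ≤ t}` is covered by the `M` balls of radius `t ^ (1/α)` around the datasites,
so its measure is at most `M * t ^ (d/α)`. The layer-cake formula turns this into
`‖u_{0,0}‖_{L_1} ≥ d / (d + α) * M ^ (-α/d)`, where `d / (d + α) ≥ 1/2` as `α ≤ 1 ≤ d`; finally
`u_{0,ε} ≥ min ε + u_{0,0}` and `L_1 ≤ L_p` on a probability space.

Upper bound: disjoint balls of radius `r/2` around an `r`-separated set in `X` fit into the ball of
radius `1 + r/2`, so comparing volumes shows that `X` is covered by `M` balls of radius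
`r = 3 * M ^ (-1/d)` centred in `X`. With these centres, `u_{0,ε} ≤ max ε + r ^ α` on `X`.
-/

section Covering

open Metric Module
open scoped NNReal

theorem exists_forall_dist_le_of_coveringNumber_le {X ι : Type*} [PseudoMetricSpace X] [Fintype ι]
    {r : ℝ≥0} {A : Set X} (hA : A.Nonempty) (hcard : coveringNumber r A ≤ Fintype.card ι) :
    ∃ xs : ι → X, (∀ i, xs i ∈ A) ∧ ∀ x ∈ A, ∃ i, dist x (xs i) ≤ r := by
  have hfin : coveringNumber r A ≠ ⊤ := ne_top_of_le_ne_top (ENat.natCast_ne_top _) hcard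
  have hcover := (isCover_minimalCover hfin).subset_iUnion_closedBall
  have : Nonempty (minimalCover r A) := ((isCover_minimalCover hfin).nonempty hA).to_subtype
  have : Fintype (minimalCover r A) := finite_minimalCover.fintype
  obtain ⟨e⟩ : Nonempty (minimalCover r A ↪ ι) := by
    refine Function.Embedding.nonempty_of_card_le ?_
    rwa [← encard_minimalCover hfin, ← Set.coe_fintypeCard, Nat.cast_le] at hcard
  refine ⟨fun i ↦ (Function.invFun e i).val, fun i ↦ minimalCover_subset (Subtype.prop _),
    fun x hx ↦ ?_⟩
  obtain ⟨y, hy, hxy⟩ := Set.mem_iUnion₂.1 (hcover hx)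
  obtain ⟨i, hi⟩ := Function.invFun_surjective e.injective ⟨y, hy⟩
  exact ⟨i, by simpa only [hi] using mem_closedBall.1 hxy⟩

variable {E : Type*} [NormedAddCommGroup E] [NormedSpace ℝ E] [FiniteDimensional ℝ E]
  {c : E} {R : ℝ} {r : ℝ≥0}

theorem card_mul_pow_le_of_isSeparated (hR : 0 ≤ R) {S : Finset E}
    (hS : (S : Set E) ⊆ closedBall c R) (hsep : IsSeparated r (S : Set E)) :
    S.card * (r / 2 : ℝ) ^ finrank ℝ E ≤ (R + r / 2) ^ finrank ℝ E := by
  borelize E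
  let μ : Measure E := Measure.addHaar
  have hdisj : (S : Set E).PairwiseDisjoint fun x ↦ closedBall x (r / 2 : ℝ) := by
    intro x hx y hy hxy
    have hdist : r < nndist x y := by
      simpa only [edist_nndist, ENNReal.coe_lt_coe] using hsep hx hy hxy
    rw [← NNReal.coe_lt_coe, coe_nndist] at hdist
    exact closedBall_disjoint_closedBall (by linarith)
  have hsub : ⋃ x ∈ S, closedBall x (r / 2 : ℝ) ⊆ closedBall c (R + r / 2) :=
    Set.iUnion₂_subset fun x hx ↦
      closedBall_subset_closedBall' (by linarith [mem_closedBall.1 (hS hx)])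
  have hpos : 0 < μ.real (closedBall 0 1) :=
    ENNReal.toReal_pos (measure_closedBall_pos μ 0 one_pos).ne' measure_closedBall_lt_top.ne
  refine le_of_mul_le_mul_right ?_ hpos
  calc S.card * (r / 2 : ℝ) ^ finrank ℝ E * μ.real (closedBall 0 1)
      = ∑ x ∈ S, μ.real (closedBall x (r / 2 : ℝ)) := by
        simp [μ.addHaar_real_closedBall' _ (show (0 : ℝ) ≤ r / 2 by positivity), mul_assoc]
    _ = μ.real (⋃ x ∈ S, closedBall x (r / 2 : ℝ)) :=
        (measureReal_biUnion_finset hdisj (fun _ _ ↦ measurableSet_closedBall)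
          fun _ _ ↦ measure_closedBall_lt_top.ne).symm
    _ ≤ μ.real (closedBall c (R + r / 2)) := measureReal_mono hsub measure_closedBall_lt_top.ne
    _ = (R + r / 2) ^ finrank ℝ E * μ.real (closedBall 0 1) :=
        μ.addHaar_real_closedBall' c (by positivity)

theorem packingNumber_closedBall_le (hR : 0 ≤ R) (hr : 0 < r) {n : ℕ}
    (hn : (R + r / 2) ^ finrank ℝ E ≤ n * (r / 2 : ℝ) ^ finrank ℝ E) :
    packingNumber r (closedBall c R) ≤ n := by
  refine iSup₂_le fun C hC ↦ iSup_le fun hsep ↦ ?_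
  by_contra! hlt
  obtain ⟨T, hTC, hT⟩ := Set.exists_subset_encard_eq (Order.add_one_le_of_lt hlt)
  lift T to Finset E using Set.finite_of_encard_eq_coe (k := n + 1) (mod_cast hT)
  have hcard : T.card = n + 1 := by
    rw [Set.encard_coe_eq_coe_finsetCard] at hT
    exact_mod_cast hT
  have hle := (card_mul_pow_le_of_isSeparated hR (hTC.trans hC) (hsep.mono hTC)).trans hn
  have hrpos : 0 < (r / 2 : ℝ) ^ finrank ℝ E := by positivity
  have := le_of_mul_le_mul_right hle hrpos
  rw [hcard, Nat.cast_le] at this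
  omega

theorem coveringNumber_closedBall_le (hR : 0 < R) (hr : 0 < r) {n : ℕ}
    (hn : (3 * R) ^ finrank ℝ E ≤ n * (r : ℝ) ^ finrank ℝ E) :
    coveringNumber r (closedBall c R) ≤ n := by
  rcases le_total (r : ℝ) R with hrR | hRr
  · refine (coveringNumber_le_packingNumber _ _).trans (packingNumber_closedBall_le hR.le hr ?_)
    calc (R + r / 2) ^ finrank ℝ E
        ≤ (3 * R / 2) ^ finrank ℝ E := by gcongr; linarith
      _ = (3 * R) ^ finrank ℝ E / 2 ^ finrank ℝ E := div_pow _ _ _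
      _ ≤ n * (r : ℝ) ^ finrank ℝ E / 2 ^ finrank ℝ E := by gcongr
      _ = n * (r / 2 : ℝ) ^ finrank ℝ E := by rw [div_pow, mul_div_assoc]
  · have hcover : IsCover r (closedBall c R) {c} :=
      .of_subset_iUnion_closedBall (by simpa using closedBall_subset_closedBall hRr)
    have hn0 : n ≠ 0 := by
      rintro rfl
      have : 0 < (3 * R) ^ finrank ℝ E := by positivity
      simp only [Nat.cast_zero, zero_mul] at hn
      linarith
    calc coveringNumber r (closedBall c R)
        ≤ ({c} : Set E).encard := hcover.coveringNumber_le_encard (by simpa using hR.le)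
      _ ≤ n := by simpa [Set.encard_singleton] using Nat.one_le_iff_ne_zero.2 hn0

end Covering

section LayerCake

open Set

theorem integral_one_sub_div_rpow {q s : ℝ} (hq : 0 ≤ q) (hs : 0 < s) :
    ∫ t in 0..s, (1 - (t / s) ^ q) = q / (q + 1) * s := by
  have hint : IntervalIntegrable (fun t : ℝ ↦ t ^ q) volume 0 1 :=
    intervalIntegral.intervalIntegrable_rpow (.inl hq)
  rw [intervalIntegral.integral_comp_div (fun t ↦ 1 - t ^ q) hs.ne', zero_div, div_self hs.ne',
    intervalIntegral.integral_sub intervalIntegrable_const hint,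
    integral_rpow (.inl (by linarith)), Real.one_rpow, Real.zero_rpow (by positivity)]
  simp only [intervalIntegral.integral_const, smul_eq_mul]
  field_simp
  ring

theorem ofReal_le_lintegral_of_measure_le_rpow {Ω : Type*} [MeasurableSpace Ω] {P : Measure Ω}
    [IsProbabilityMeasure P] {f : Ω → ℝ} (hf : AEMeasurable f P) (hf0 : 0 ≤ f) {q s : ℝ}
    (hq : 0 ≤ q) (hs : 0 < s)
    (hP : ∀ t ∈ Ioc 0 s, P {x | f x ≤ t} ≤ ENNReal.ofReal ((t / s) ^ q)) :
    ENNReal.ofReal (q / (q + 1) * s) ≤ ∫⁻ x, ENNReal.ofReal (f x) ∂P := by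
  have hint : IntegrableOn (fun t ↦ 1 - (t / s) ^ q) (Ioc 0 s) := by
    refine (ContinuousOn.integrableOn_Icc ?_).mono_set Ioc_subset_Icc_self
    fun_prop (disch := assumption)
  have hnonneg : ∀ᵐ t ∂volume.restrict (Ioc 0 s), 0 ≤ 1 - (t / s) ^ q := by
    filter_upwards [ae_restrict_mem measurableSet_Ioc] with t ht
    exact sub_nonneg.2 (Real.rpow_le_one (div_nonneg ht.1.le hs.le) ((div_le_one hs).2 ht.2) hq)
  calc ENNReal.ofReal (q / (q + 1) * s)
      = ∫⁻ t in Ioc 0 s, ENNReal.ofReal (1 - (t / s) ^ q) := by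
        rw [← integral_one_sub_div_rpow hq hs, intervalIntegral.integral_of_le hs.le,
          ofReal_integral_eq_lintegral_ofReal hint hnonneg]
    _ ≤ ∫⁻ t in Ioc 0 s, P {x | t < f x} := by
        refine setLIntegral_mono' measurableSet_Ioc fun t ht ↦ ?_
        have hcompl : {x | t < f x} = {x | f x ≤ t}ᶜ := by ext; simp
        rw [hcompl, prob_compl_eq_one_sub₀ (nullMeasurableSet_le hf aemeasurable_const),
          ENNReal.ofReal_sub _ (Real.rpow_nonneg (div_nonneg ht.1.le hs.le) q),
          ENNReal.ofReal_one]
        exact tsub_le_tsub_left (hP t ht) 1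
    _ ≤ ∫⁻ t in Ioi 0, P {x | t < f x} := lintegral_mono_set Ioc_subset_Ioi_self
    _ = ∫⁻ x, ENNReal.ofReal (f x) ∂P :=
        (lintegral_eq_lintegral_meas_lt P (.of_forall hf0) hf).symm

end LayerCake

section UniformBall

open Metric Module ProbabilityTheory

variable {E : Type*} [MeasurableSpace E]

theorem isProbabilityMeasure_cond_closedBall [PseudoMetricSpace E] [ProperSpace E] (ν : Measure E)
    [ν.IsOpenPosMeasure] [IsFiniteMeasureOnCompacts ν] (c : E) {R : ℝ} (hR : 0 < R) :
    IsProbabilityMeasure ν[|closedBall c R] :=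
  cond_isProbabilityMeasure_of_finite (measure_closedBall_pos ν c hR).ne'
    measure_closedBall_lt_top.ne

theorem cond_closedBall_le [NormedAddCommGroup E] [NormedSpace ℝ E] [FiniteDimensional ℝ E]
    [BorelSpace E] (ν : Measure E) [ν.IsAddHaarMeasure] (c : E) {r : ℝ} (hr : 0 ≤ r) :
    ν[|closedBall 0 1] (closedBall c r) ≤ ENNReal.ofReal (r ^ finrank ℝ E) := by
  have hV0 : ν (closedBall 0 1) ≠ 0 := (measure_closedBall_pos ν 0 one_pos).ne'
  have hV : ν (closedBall 0 1) ≠ ∞ := measure_closedBall_lt_top.ne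
  calc ν[|closedBall 0 1] (closedBall c r)
      = (ν (closedBall 0 1))⁻¹ * ν (closedBall 0 1 ∩ closedBall c r) :=
        cond_apply measurableSet_closedBall ν _
    _ ≤ (ν (closedBall 0 1))⁻¹ * ν (closedBall c r) := by gcongr; exact Set.inter_subset_right
    _ = ENNReal.ofReal (r ^ finrank ℝ E) := by
        rw [ν.addHaar_closedBall' c hr, mul_left_comm, ENNReal.inv_mul_cancel hV0 hV, mul_one]

end UniformBall

section WorstCaseError

open Metric Set

variable {E ι : Type*} [SeminormedAddCommGroup E]

/-- The function `u_{0,ε}` whose `L_p` norm is the worst-case error of optimal recovery of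
`α`-Hölder functions from evaluations at the datasites `xs i` with accuracies `ε i`. -/
noncomputable def worstCaseError (α : ℝ) (ε : ι → ℝ) (xs : ι → E) (x : E) : ℝ :=
  ⨅ i, (ε i + ‖x - xs i‖ ^ α)

theorem worstCaseError_nonneg {α : ℝ} {ε : ι → ℝ} (hε : ∀ i, 0 ≤ ε i) (xs : ι → E) (x : E) :
    0 ≤ worstCaseError α ε xs x :=
  Real.iInf_nonneg fun i ↦ add_nonneg (hε i) (Real.rpow_nonneg (norm_nonneg _) α)

theorem measurable_worstCaseError [Countable ι] [MeasurableSpace E] [OpensMeasurableSpace E]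
    [MeasurableSub E] (α : ℝ) (ε : ι → ℝ) (xs : ι → E) : Measurable (worstCaseError α ε xs) :=
  Measurable.iInf fun i ↦
    ((continuous_norm.measurable.comp (measurable_id.sub_const (xs i))).pow_const α).const_add (ε i)

theorem worstCaseError_le_iSup_add [Finite ι] {α : ℝ} (hα : 0 ≤ α) (ε : ι → ℝ) {xs : ι → E}
    {x : E} {r : ℝ} {i : ι} (hi : ‖x - xs i‖ ≤ r) :
    worstCaseError α ε xs x ≤ (⨆ j, ε j) + r ^ α :=
  (ciInf_le (finite_range _).bddBelow i).trans <|
    add_le_add (le_ciSup (finite_range ε).bddAbove i)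
      (Real.rpow_le_rpow (norm_nonneg _) hi hα)

theorem iInf_add_worstCaseError_zero_le [Finite ι] [Nonempty ι] (α : ℝ) (ε : ι → ℝ) (xs : ι → E)
    (x : E) : (⨅ i, ε i) + worstCaseError α 0 xs x ≤ worstCaseError α ε xs x :=
  le_ciInf fun i ↦ add_le_add (ciInf_le (finite_range ε).bddBelow i) <|
    (ciInf_le (finite_range _).bddBelow i).trans_eq (zero_add _)

theorem setOf_worstCaseError_zero_le_subset [Finite ι] [Nonempty ι] {α : ℝ} (hα : 0 < α)
    (xs : ι → E) (t : ℝ) :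
    {x | worstCaseError α 0 xs x ≤ t} ⊆ ⋃ i, closedBall (xs i) (t ^ α⁻¹) := by
  intro x hx
  obtain ⟨i, hi⟩ := exists_eq_ciInf_of_finite (f := fun i ↦ (0 : ι → ℝ) i + ‖x - xs i‖ ^ α)
  have hit : ‖x - xs i‖ ^ α ≤ t := by
    simpa only [Pi.zero_apply, zero_add] using hi.trans_le hx
  have ht : 0 ≤ t := (Real.rpow_nonneg (norm_nonneg _) α).trans hit
  exact mem_iUnion.2 ⟨i, mem_closedBall_iff_norm.2 <|
    (Real.le_rpow_inv_iff_of_pos (norm_nonneg _) ht hα).2 hit⟩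

end WorstCaseError

section Bounds

open Metric Module ProbabilityTheory
open scoped NNReal

variable {E ι : Type*} [NormedAddCommGroup E] [NormedSpace ℝ E] [FiniteDimensional ℝ E]
  [Fintype ι] [Nonempty ι]

theorem exists_worstCaseError_le [Nontrivial E] {α : ℝ} (hα : 0 ≤ α) (ε : ι → ℝ) :
    ∃ xs : ι → E, (∀ i, xs i ∈ closedBall 0 1) ∧ ∀ x ∈ closedBall 0 1,
      worstCaseError α ε xs x ≤
        (⨆ i, ε i) + 3 ^ α * (Fintype.card ι : ℝ) ^ (-(α / finrank ℝ E)) := by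
  set n := Fintype.card ι
  have hn : 0 < (n : ℝ) := Nat.cast_pos.2 Fintype.card_pos
  have hd : (finrank ℝ E : ℝ) ≠ 0 := Nat.cast_ne_zero.2 finrank_pos.ne'
  let r : ℝ≥0 := 3 * (n : ℝ≥0) ^ (-(finrank ℝ E : ℝ)⁻¹)
  have hr : (r : ℝ) = 3 * (n : ℝ) ^ (-(finrank ℝ E : ℝ)⁻¹) := by simp [r]
  have hr0 : 0 < r := by rw [← NNReal.coe_pos, hr]; positivity
  have hvolume : (3 * 1) ^ finrank ℝ E ≤ n * (r : ℝ) ^ finrank ℝ E := by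
    rw [hr, mul_pow _ (_ ^ _), ← Real.rpow_mul_natCast hn.le, neg_mul, inv_mul_cancel₀ hd,
      Real.rpow_neg_one]
    apply le_of_eq
    field_simp
  have hrα : (r : ℝ) ^ α = 3 ^ α * (n : ℝ) ^ (-(α / finrank ℝ E)) := by
    rw [hr, Real.mul_rpow (by norm_num) (by positivity), ← Real.rpow_mul hn.le]
    congr 2
    ring
  obtain ⟨xs, hxs, hcover⟩ := exists_forall_dist_le_of_coveringNumber_le (ι := ι)
    (nonempty_closedBall.2 zero_le_one)
    (coveringNumber_closedBall_le (c := (0 : E)) one_pos hr0 hvolume)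
  refine ⟨xs, hxs, fun x hx ↦ ?_⟩
  obtain ⟨i, hi⟩ := hcover x hx
  rw [← hrα]
  exact worstCaseError_le_iSup_add hα ε (dist_eq_norm x (xs i) ▸ hi)

variable [MeasurableSpace E] [BorelSpace E] (ν : Measure E) [ν.IsAddHaarMeasure]

theorem cond_worstCaseError_zero_le {α t : ℝ} (hα : 0 < α) (ht : 0 ≤ t) (xs : ι → E) :
    ν[|closedBall 0 1] {x | worstCaseError α 0 xs x ≤ t} ≤
      ENNReal.ofReal (Fintype.card ι * t ^ (finrank ℝ E / α)) := by
  have hpow : (t ^ α⁻¹) ^ finrank ℝ E = t ^ (finrank ℝ E / α) := by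
    rw [← Real.rpow_mul_natCast ht, inv_mul_eq_div]
  calc ν[|closedBall 0 1] {x | worstCaseError α 0 xs x ≤ t}
      ≤ ∑ i, ν[|closedBall 0 1] (closedBall (xs i) (t ^ α⁻¹)) :=
        (measure_mono (setOf_worstCaseError_zero_le_subset hα xs t)).trans
          (measure_iUnion_fintype_le _ _)
    _ ≤ ∑ _i : ι, ENNReal.ofReal (t ^ (finrank ℝ E / α)) := by
        gcongr with i
        exact hpow ▸ cond_closedBall_le ν (xs i) (by positivity)
    _ = ENNReal.ofReal (Fintype.card ι * t ^ (finrank ℝ E / α)) := by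
        rw [Finset.sum_const, Finset.card_univ, nsmul_eq_mul, ENNReal.ofReal_mul (by positivity),
          ENNReal.ofReal_natCast]

theorem ofReal_le_lintegral_worstCaseError_zero [Nontrivial E] {α : ℝ} (hα : 0 < α) (xs : ι → E) :
    ENNReal.ofReal (finrank ℝ E / (finrank ℝ E + α) *
        (Fintype.card ι : ℝ) ^ (-(α / finrank ℝ E))) ≤
      ∫⁻ x, ENNReal.ofReal (worstCaseError α 0 xs x) ∂ν[|closedBall 0 1] := by
  set n := Fintype.card ι
  set s : ℝ := n ^ (-(α / finrank ℝ E)) with hs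
  have hn0 : 0 < (n : ℝ) := Nat.cast_pos.2 Fintype.card_pos
  have hd : 0 < (finrank ℝ E : ℝ) := Nat.cast_pos.2 finrank_pos
  have hs0 : 0 < s := Real.rpow_pos_of_pos hn0 _
  have hsn : s ^ (finrank ℝ E / α) = (n : ℝ)⁻¹ := by
    rw [hs, ← Real.rpow_mul hn0.le, ← Real.rpow_neg_one]
    congr 1
    field_simp
  have hq : (finrank ℝ E / (finrank ℝ E + α) : ℝ) =
      finrank ℝ E / α / (finrank ℝ E / α + 1) := by field_simp
  have := isProbabilityMeasure_cond_closedBall ν (0 : E) one_pos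
  rw [hq]
  refine ofReal_le_lintegral_of_measure_le_rpow (measurable_worstCaseError α 0 xs).aemeasurable
    (worstCaseError_nonneg (fun _ ↦ le_rfl) xs) (by positivity) hs0 fun t ht ↦ ?_
  refine (cond_worstCaseError_zero_le ν hα ht.1.le xs).trans_eq ?_
  rw [Real.div_rpow ht.1.le hs0.le, hsn, div_inv_eq_mul, mul_comm]

theorem ofReal_le_eLpNorm_worstCaseError [Nontrivial E] {α : ℝ} (hα : 0 < α) {ε : ι → ℝ}
    (hε : ∀ i, 0 ≤ ε i) {p : ℝ≥0∞} (hp : 1 ≤ p) (xs : ι → E) :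
    ENNReal.ofReal ((⨅ i, ε i) + finrank ℝ E / (finrank ℝ E + α) *
        (Fintype.card ι : ℝ) ^ (-(α / finrank ℝ E))) ≤
      eLpNorm (worstCaseError α ε xs) p ν[|closedBall 0 1] := by
  have := isProbabilityMeasure_cond_closedBall ν (0 : E) one_pos
  have hε0 : 0 ≤ ⨅ i, ε i := Real.iInf_nonneg hε
  have hzero : 0 ≤ worstCaseError α 0 xs := worstCaseError_nonneg (fun _ ↦ le_rfl) xs
  calc _ = ENNReal.ofReal (⨅ i, ε i) + ENNReal.ofReal (finrank ℝ E / (finrank ℝ E + α) *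
          (Fintype.card ι : ℝ) ^ (-(α / finrank ℝ E))) :=
        ENNReal.ofReal_add hε0 (by positivity)
    _ ≤ ENNReal.ofReal (⨅ i, ε i) +
          ∫⁻ x, ENNReal.ofReal (worstCaseError α 0 xs x) ∂ν[|closedBall 0 1] := by
        gcongr
        exact ofReal_le_lintegral_worstCaseError_zero ν hα xs
    _ = ∫⁻ x, ENNReal.ofReal ((⨅ i, ε i) + worstCaseError α 0 xs x) ∂ν[|closedBall 0 1] := by
        rw [lintegral_congr fun x ↦ ENNReal.ofReal_add hε0 (hzero x),
          lintegral_add_left measurable_const, lintegral_const, measure_univ, mul_one]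
    _ ≤ ∫⁻ x, ‖worstCaseError α ε xs x‖ₑ ∂ν[|closedBall 0 1] := by
        gcongr with x
        exact (ENNReal.ofReal_le_ofReal (iInf_add_worstCaseError_zero_le α ε xs x)).trans
          (Real.ofReal_le_enorm _)
    _ = eLpNorm (worstCaseError α ε xs) 1 ν[|closedBall 0 1] :=
        eLpNorm_one_eq_lintegral_enorm.symm
    _ ≤ eLpNorm (worstCaseError α ε xs) p ν[|closedBall 0 1] :=
        eLpNorm_le_eLpNorm_of_exponent_le hp
          (measurable_worstCaseError α ε xs).aestronglyMeasurable

theorem exists_eLpNorm_worstCaseError_le [Nontrivial E] {α : ℝ} (hα : 0 ≤ α) {ε : ι → ℝ}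
    (hε : ∀ i, 0 ≤ ε i) (p : ℝ≥0∞) :
    ∃ xs : ι → E, (∀ i, xs i ∈ closedBall 0 1) ∧
      eLpNorm (worstCaseError α ε xs) p ν[|closedBall 0 1] ≤
        ENNReal.ofReal ((⨆ i, ε i) + 3 ^ α * (Fintype.card ι : ℝ) ^ (-(α / finrank ℝ E))) := by
  have := isProbabilityMeasure_cond_closedBall ν (0 : E) one_pos
  obtain ⟨xs, hxs, hle⟩ := exists_worstCaseError_le (E := E) hα ε
  refine ⟨xs, hxs, (eLpNorm_le_of_ae_bound (C := (⨆ i, ε i) + 3 ^ α *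
    (Fintype.card ι : ℝ) ^ (-(α / finrank ℝ E))) ?_).trans_eq (by simp)⟩
  filter_upwards [ae_cond_mem measurableSet_closedBall] with x hx
  exact (Real.norm_of_nonneg (worstCaseError_nonneg hε xs x)).trans_le (hle x hx)

end Bounds

section NormOfSeminorm

theorem topologicalSpace_eq_of_finiteDimensional {𝕜 E : Type*} [NontriviallyNormedField 𝕜]
    [CompleteSpace 𝕜] [AddCommGroup E] [Module 𝕜 E] [FiniteDimensional 𝕜 E]
    (t₁ t₂ : TopologicalSpace E)
    [@IsTopologicalAddGroup E t₁ _] [@ContinuousSMul 𝕜 E _ _ t₁] [@T2Space E t₁]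
    [@IsTopologicalAddGroup E t₂ _] [@ContinuousSMul 𝕜 E _ _ t₂] [@T2Space E t₂] : t₁ = t₂ :=
  have h₁ : @IsModuleTopology 𝕜 _ E _ _ t₁ :=
    @isModuleTopologyOfFiniteDimensional 𝕜 _ E _ _ t₁ _ _ _ _ _
  have h₂ : @IsModuleTopology 𝕜 _ E _ _ t₂ :=
    @isModuleTopologyOfFiniteDimensional 𝕜 _ E _ _ t₂ _ _ _ _ _
  h₁.eq_moduleTopology'.trans h₂.eq_moduleTopology'.symm

variable {E : Type*} [AddCommGroup E] [Module ℝ E]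

theorem normedSpaceCore_of_seminorm (N : Seminorm ℝ E) (hN : ∀ x, N x = 0 → x = 0) :
    letI : Norm E := ⟨N⟩
    NormedSpace.Core ℝ E :=
  letI : Norm E := ⟨N⟩
  { norm_nonneg := apply_nonneg N
    norm_smul := map_smul_eq_mul N
    norm_triangle := map_add_le_add N
    norm_eq_zero_iff := fun x ↦ ⟨hN x, fun hx ↦ hx ▸ map_zero N⟩ }

variable [TopologicalSpace E] [IsTopologicalAddGroup E] [ContinuousSMul ℝ E] [T2Space E]
  [FiniteDimensional ℝ E]

/-- The norm on a finite-dimensional space given by a definite seminorm, with a topology that is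
definitionally the ambient one, so that a given Borel structure and Haar measure are kept. -/
noncomputable abbrev normedAddCommGroupOfSeminorm (N : Seminorm ℝ E) (hN : ∀ x, N x = 0 → x = 0) :
    NormedAddCommGroup E :=
  letI : Norm E := ⟨N⟩
  .ofCoreReplaceTopology (normedSpaceCore_of_seminorm N hN) <| by
    let := NormedAddCommGroup.ofCore (normedSpaceCore_of_seminorm N hN)
    let := NormedSpace.ofCore (normedSpaceCore_of_seminorm N hN)
    exact topologicalSpace_eq_of_finiteDimensional (𝕜 := ℝ) _ _

end NormOfSeminorm

open Module ProbabilityTheory in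
theorem stmt16_general {E ι : Type*} [AddCommGroup E] [Module ℝ E] [TopologicalSpace E]
    [IsTopologicalAddGroup E] [ContinuousSMul ℝ E] [T2Space E] [FiniteDimensional ℝ E]
    [Nontrivial E] [MeasurableSpace E] [BorelSpace E] (ν : Measure E) [ν.IsAddHaarMeasure]
    [Fintype ι] [Nonempty ι] (N : Seminorm ℝ E) (hN : ∀ x, N x = 0 → x = 0) {α : ℝ} (hα : 0 < α)
    {ε : ι → ℝ} (hε : ∀ i, 0 ≤ ε i) {p : ℝ≥0∞} (hp : 1 ≤ p) :
    ENNReal.ofReal ((⨅ i, ε i) + finrank ℝ E / (finrank ℝ E + α) *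
        (Fintype.card ι : ℝ) ^ (-(α / finrank ℝ E))) ≤
      (⨅ (xs : ι → E) (_ : ∀ i, N (xs i) ≤ 1),
        eLpNorm (fun x ↦ ⨅ i, (ε i + N (x - xs i) ^ α)) p ν[|{x | N x ≤ 1}]) ∧
    (⨅ (xs : ι → E) (_ : ∀ i, N (xs i) ≤ 1),
        eLpNorm (fun x ↦ ⨅ i, (ε i + N (x - xs i) ^ α)) p ν[|{x | N x ≤ 1}]) ≤
      ENNReal.ofReal ((⨆ i, ε i) + 3 ^ α * (Fintype.card ι : ℝ) ^ (-(α / finrank ℝ E))) := by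
  let := normedAddCommGroupOfSeminorm N hN
  let := NormedSpace.ofCore (normedSpaceCore_of_seminorm N hN)
  have hball : Metric.closedBall (0 : E) 1 = {x | N x ≤ 1} :=
    Set.ext fun _ ↦ mem_closedBall_zero_iff
  obtain ⟨xs, hxs, hle⟩ := exists_eLpNorm_worstCaseError_le (ι := ι) ν hα.le hε p
  simp only [hball] at hxs hle
  exact ⟨le_iInf₂ fun xs _ ↦ hball ▸ ofReal_le_eLpNorm_worstCaseError ν hα hε hp xs,
    (iInf₂_le xs hxs).trans hle⟩

/-- For an arbitrary norm `N` on `ℝ^d` with unit ball `X = {N ≤ 1}` carrying the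
normalized Lebesgue measure `μ`, accuracies `ε_m ≥ 0` and `p ∈ [1,∞]`,
`min_m ε_m + (1/2) M^(-α/d) ≤ inf over datasites of ‖u_{0,ε}‖_{L_p(X,μ)}
  ≤ max_m ε_m + 3 M^(-α/d)`. -/
theorem stmt16 (d : ℕ) (hd : 0 < d)
    (N : (Fin d → ℝ) → ℝ)
    (hN0 : ∀ x, N x = 0 ↔ x = 0)
    (hNsmul : ∀ (c : ℝ) (x), N (c • x) = |c| * N x)
    (hNadd : ∀ x y, N (x + y) ≤ N x + N y)
    (α : ℝ) (hα : 0 < α) (hα1 : α ≤ 1)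
    (M : ℕ) (hM : 0 < M)
    (ε : Fin M → ℝ) (hε : ∀ m, 0 ≤ ε m)
    (p : ℝ≥0∞) (hp : 1 ≤ p) :
    ENNReal.ofReal ((⨅ m : Fin M, ε m) + (1 / 2) * (M : ℝ) ^ (-(α / (d : ℝ)))) ≤
      (⨅ (xs : Fin M → (Fin d → ℝ)) (_ : ∀ m, N (xs m) ≤ 1),
        eLpNorm (fun x => ⨅ m : Fin M, (ε m + N (x - xs m) ^ α)) p
          ((volume {x : Fin d → ℝ | N x ≤ 1})⁻¹ •
            volume.restrict {x : Fin d → ℝ | N x ≤ 1})) ∧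
    (⨅ (xs : Fin M → (Fin d → ℝ)) (_ : ∀ m, N (xs m) ≤ 1),
        eLpNorm (fun x => ⨅ m : Fin M, (ε m + N (x - xs m) ^ α)) p
          ((volume {x : Fin d → ℝ | N x ≤ 1})⁻¹ •
            volume.restrict {x : Fin d → ℝ | N x ≤ 1})) ≤
      ENNReal.ofReal ((⨆ m : Fin M, ε m) + 3 * (M : ℝ) ^ (-(α / (d : ℝ)))) := by
  have : NeZero d := ⟨hd.ne'⟩
  have : NeZero M := ⟨hM.ne'⟩
  have hd1 : (1 : ℝ) ≤ d := mod_cast hd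
  have hα3 : (3 : ℝ) ^ α ≤ 3 := Real.rpow_le_self_of_one_le (by norm_num) hα1
  have hhalf : (1 / 2 : ℝ) ≤ d / (d + α) := by rw [div_le_div_iff₀] <;> linarith
  obtain ⟨lower, upper⟩ := stmt16_general volume (.of N hNadd hNsmul) (fun x ↦ (hN0 x).1) hα hε hp
  rw [Module.finrank_fin_fun, Fintype.card_fin] at lower upper
  exact ⟨le_trans (by gcongr) lower, upper.trans (by gcongr)⟩
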